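/- Assume P ∈ C²(ℝⁿ,ℝⁿ), Q ∈ C¹(ℝⁿ×[0,1],ℝⁿ), v₀ ∈ ℝⁿ satisfies P(v₀)=0, and Π : ℝⁿ → ℝⁿ is a linear projector with ΠP'(v₀) = 0 and ΠQ(v₀,0) = 0. Define Ψ(w,ε) for ε > 0 by Ψ(w,ε) = (1/ε)(Φ(v₀+εw,ε) − ΠΦ(v₀+εw,ε)) + (1/ε²)ΠΦ(v₀+εw,ε) where Φ(v,ε) = P(v)+εQ(v,ε). Then for each ε > 0 the map w ↦ Ψ(w,ε) is differentiable with derivative Ψ'_w(w,ε) = ΠP''(v₀+ε̃w)w + ΠQ'_v(v₀+εw,ε) + (I−Π)P'(v₀+εw) + ε(I−Π)Q'_v(v₀+εw,ε) for some ε̃ ∈ [0,ε] (i.e. equal to (1/ε)ΠP'(v₀+εw) + ΠQ'_v(v₀+εw,ε) + (I−Π)P'(v₀+εw) + ε(I−Π)Q'_v(v₀+εw,ε)), and as (w,ε)→(w₀,0) with ε>0 this derivative converges in the operator norm to the linear map Ψ'_w(w₀,0) := ΠP''(v₀)w₀ + ΠQ'_v(v₀,0) + (I−Π)P'(v₀).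 -/

import Mathlib

open Set Filter Topology

/-!
Put `S ε = ε⁻¹ (I - Π) + ε⁻² Π`, so that `Ψ(w, ε) = S ε (Φ(v₀ + ε w, ε))`. The chain rule gives
`Ψ'_w = (ε S ε) ∘ Φ'_v = ((I - Π) + ε⁻¹ Π) ∘ (P' + ε Q'_v)` at `v₀ + ε w`. The only term that is
singular in `ε` is `ε⁻¹ Π P'(v₀ + ε w)`; as `Π P'(v₀) = 0`, it is the difference quotient
`Π (ε⁻¹ (P'(v₀ + ε w) - P'(v₀)))`, which tends to `Π P''(v₀) w₀`.
-/

section Rescaling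

variable {𝕜 E F : Type*} [NontriviallyNormedField 𝕜]
  [NormedAddCommGroup E] [NormedSpace 𝕜 E] [NormedAddCommGroup F] [NormedSpace 𝕜 F]

theorem tendsto_add_smul_nhds (v₀ w₀ : E) :
    Tendsto (fun p : E × 𝕜 => v₀ + p.2 • p.1) (𝓝 w₀ ×ˢ 𝓝 0) (𝓝 v₀) := by
  have hcont : Continuous fun p : E × 𝕜 => v₀ + p.2 • p.1 := by fun_prop
  simpa [nhds_prod_eq] using hcont.tendsto (w₀, 0)

theorem tendsto_inv_smul_sub_of_hasFDerivAt {f : E → F} {f' : E →L[𝕜] F} {v₀ : E}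
    (hf : HasFDerivAt f f' v₀) (w₀ : E) :
    Tendsto (fun p : E × 𝕜 => p.2⁻¹ • (f (v₀ + p.2 • p.1) - f v₀))
      (𝓝 w₀ ×ˢ 𝓝[≠] 0) (𝓝 (f' w₀)) := by
  have step_tendsto : Tendsto (fun p : E × 𝕜 => p.2 • p.1) (𝓝 w₀ ×ˢ 𝓝[≠] 0) (𝓝 0) := by
    simpa using (tendsto_add_smul_nhds 0 w₀).mono_left (prod_mono le_rfl nhdsWithin_le_nhds)
  have direction_tendsto :
      Tendsto (fun p : E × 𝕜 => p.2⁻¹ • p.2 • p.1) (𝓝 w₀ ×ˢ 𝓝[≠] 0) (𝓝 w₀) := by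
    refine tendsto_fst.congr' ?_
    filter_upwards [tendsto_snd.eventually self_mem_nhdsWithin] with p hp
    exact (inv_smul_smul₀ hp p.1).symm
  exact hf.hasFDerivWithinAt.lim step_tendsto (.of_forall fun _ => mem_univ _) direction_tendsto

theorem hasFDerivAt_comp_add_smul {f : E → F} {f' : E →L[𝕜] F} {v₀ w : E} {ε : 𝕜}
    (hf : HasFDerivAt f f' (v₀ + ε • w)) :
    HasFDerivAt (fun w' => f (v₀ + ε • w')) (ε • f') w := by
  simpa [Function.comp_def] using hf.comp w (((hasFDerivAt_id w).const_smul ε).const_add v₀)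

theorem tendsto_const_clm_comp {G α : Type*} [NormedAddCommGroup G] [NormedSpace 𝕜 G]
    (T : F →L[𝕜] G) {f : α → E →L[𝕜] F} {l : Filter α} {A : E →L[𝕜] F} (hf : Tendsto f l (𝓝 A)) :
    Tendsto (fun a => T ∘L f a) l (𝓝 (T ∘L A)) :=
  ((continuous_id.const_clm_comp T).tendsto A).comp hf

theorem continuous_fderiv_left_of_contDiff {G : Type*} [NormedAddCommGroup G]
    [NormedSpace 𝕜 G] {Q : E → G → F}
    (hQ : ContDiff 𝕜 1 fun p : E × G => Q p.1 p.2) :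
    Continuous fun p : E × G => fderiv 𝕜 (fun u => Q u p.2) p.1 :=
  Continuous.fderiv_one (f := fun (p : E × G) u => Q u p.2)
    (hQ.comp (contDiff_snd.prodMk (contDiff_snd.comp contDiff_fst))) continuous_fst

/-- The operator `ε⁻¹ (I - T) + ε⁻² T`. For a projector `T` it scales the range of `T` by `ε⁻²` and
the kernel of `T` by `ε⁻¹`. It is `0` at `ε = 0`. -/
def splitScaling (T : F →L[𝕜] F) (ε : 𝕜) : F →L[𝕜] F :=
  ε⁻¹ • (ContinuousLinearMap.id 𝕜 F - T) + (ε ^ 2)⁻¹ • T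

/-- The map `Ψ(w, ε)` obtained from `Φ(v, ε) = P v + ε Q(v, ε)` by zooming in at `v₀` at scale `ε`
and applying `splitScaling T ε` to the values. -/
def rescaledMap (T : F →L[𝕜] F) (P : E → F) (Q : E → 𝕜 → F) (v₀ w : E) (ε : 𝕜) : F :=
  splitScaling T ε (P (v₀ + ε • w) + ε • Q (v₀ + ε • w) ε)

/-- The derivative `Ψ'_w(w, ε)` of `rescaledMap` in `w`, with the powers of `ε` separated. It is
meaningful for `ε ≠ 0` only: at `ε = 0` the first term is `0` rather than its limit. -/
noncomputable def rescaledFDeriv (T : F →L[𝕜] F) (P : E → F) (Q : E → 𝕜 → F) (v₀ w : E) (ε : 𝕜) :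
    E →L[𝕜] F :=
  ε⁻¹ • (T ∘L fderiv 𝕜 P (v₀ + ε • w))
    + T ∘L fderiv 𝕜 (fun u => Q u ε) (v₀ + ε • w)
    + (fderiv 𝕜 P (v₀ + ε • w) - T ∘L fderiv 𝕜 P (v₀ + ε • w))
    + ε • (fderiv 𝕜 (fun u => Q u ε) (v₀ + ε • w) - T ∘L fderiv 𝕜 (fun u => Q u ε) (v₀ + ε • w))

theorem splitScaling_comp_smul_add_smul (T : F →L[𝕜] F) (A B : E →L[𝕜] F) {ε : 𝕜} (hε : ε ≠ 0) :
    splitScaling T ε ∘L (ε • (A + ε • B)) =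
      ε⁻¹ • (T ∘L A) + T ∘L B + (A - T ∘L A) + ε • (B - T ∘L B) := by
  ext x
  simp only [splitScaling, ContinuousLinearMap.comp_apply, ContinuousLinearMap.id_apply,
    add_apply, sub_apply, smul_apply, map_add, map_smul]
  match_scalars <;> field_simp <;> ring

theorem hasFDerivAt_rescaledMap (T : F →L[𝕜] F) {P : E → F} {Q : E → 𝕜 → F} {v₀ w : E} {ε : 𝕜}
    (hε : ε ≠ 0) (hP : DifferentiableAt 𝕜 P (v₀ + ε • w))
    (hQ : DifferentiableAt 𝕜 (fun u => Q u ε) (v₀ + ε • w)) :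
    HasFDerivAt (fun w' => rescaledMap T P Q v₀ w' ε) (rescaledFDeriv T P Q v₀ w ε) w := by
  have hΦ := hasFDerivAt_comp_add_smul (hP.hasFDerivAt.add (hQ.hasFDerivAt.const_smul ε))
  exact ((splitScaling T ε).hasFDerivAt.comp w hΦ).congr_fderiv
    (splitScaling_comp_smul_add_smul T _ _ hε)

theorem tendsto_inv_smul_comp_fderiv {G : Type*} [NormedAddCommGroup G] [NormedSpace 𝕜 G]
    {T : F →L[𝕜] G} {P : E → F} {v₀ : E}
    (hP' : DifferentiableAt 𝕜 (fderiv 𝕜 P) v₀) (hTP : T ∘L fderiv 𝕜 P v₀ = 0) (w₀ : E) :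
    Tendsto (fun p : E × 𝕜 => p.2⁻¹ • (T ∘L fderiv 𝕜 P (v₀ + p.2 • p.1)))
      (𝓝 w₀ ×ˢ 𝓝[≠] 0) (𝓝 (T ∘L fderiv 𝕜 (fderiv 𝕜 P) v₀ w₀)) := by
  have quotient_tendsto := tendsto_inv_smul_sub_of_hasFDerivAt hP'.hasFDerivAt w₀
  refine (tendsto_const_clm_comp T quotient_tendsto).congr fun p => ?_
  simp [ContinuousLinearMap.comp_sub, hTP]

theorem tendsto_rescaledFDeriv {T : F →L[𝕜] F} {P : E → F} {Q : E → 𝕜 → F} {v₀ : E}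
    (hP' : DifferentiableAt 𝕜 (fderiv 𝕜 P) v₀)
    (hQ' : ContinuousAt (fun p : E × 𝕜 => fderiv 𝕜 (fun u => Q u p.2) p.1) (v₀, 0))
    (hTP : T ∘L fderiv 𝕜 P v₀ = 0) (w₀ : E) :
    Tendsto (fun p : E × 𝕜 => rescaledFDeriv T P Q v₀ p.1 p.2) (𝓝 w₀ ×ˢ 𝓝[≠] 0)
      (𝓝 (T ∘L fderiv 𝕜 (fderiv 𝕜 P) v₀ w₀ + T ∘L fderiv 𝕜 (fun u => Q u 0) v₀
        + (fderiv 𝕜 P v₀ - T ∘L fderiv 𝕜 P v₀))) := by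
  have hε : Tendsto (fun p : E × 𝕜 => p.2) (𝓝 w₀ ×ˢ 𝓝[≠] 0) (𝓝 0) :=
    tendsto_snd.mono_right nhdsWithin_le_nhds
  have hv : Tendsto (fun p : E × 𝕜 => v₀ + p.2 • p.1) (𝓝 w₀ ×ˢ 𝓝[≠] 0) (𝓝 v₀) :=
    (tendsto_add_smul_nhds v₀ w₀).mono_left (prod_mono le_rfl nhdsWithin_le_nhds)
  have hPlim : Tendsto (fun p : E × 𝕜 => fderiv 𝕜 P (v₀ + p.2 • p.1)) (𝓝 w₀ ×ˢ 𝓝[≠] 0)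
      (𝓝 (fderiv 𝕜 P v₀)) := hP'.continuousAt.tendsto.comp hv
  have hQlim : Tendsto (fun p : E × 𝕜 => fderiv 𝕜 (fun u => Q u p.2) (v₀ + p.2 • p.1))
      (𝓝 w₀ ×ˢ 𝓝[≠] 0) (𝓝 (fderiv 𝕜 (fun u => Q u 0) v₀)) :=
    hQ'.tendsto.comp (hv.prodMk_nhds hε)
  simpa only [rescaledFDeriv, zero_smul, add_zero] using
    (((tendsto_inv_smul_comp_fderiv hP' hTP w₀).add (tendsto_const_clm_comp T hQlim)).add
      (hPlim.sub (tendsto_const_clm_comp T hPlim))).add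
      (hε.smul (hQlim.sub (tendsto_const_clm_comp T hQlim)))

theorem stmt_2_general {T : F →L[𝕜] F} {P : E → F} {Q : E → 𝕜 → F} {v₀ : E}
    (hP : Differentiable 𝕜 P) (hP' : DifferentiableAt 𝕜 (fderiv 𝕜 P) v₀)
    (hQ : ∀ ε, Differentiable 𝕜 fun u => Q u ε)
    (hQ' : ContinuousAt (fun p : E × 𝕜 => fderiv 𝕜 (fun u => Q u p.2) p.1) (v₀, 0))
    (hTP : T ∘L fderiv 𝕜 P v₀ = 0) :
    (∀ ε ≠ (0 : 𝕜), ∀ w : E,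
      HasFDerivAt (fun w' => rescaledMap T P Q v₀ w' ε) (rescaledFDeriv T P Q v₀ w ε) w) ∧
    ∀ w₀ : E, Tendsto (fun p : E × 𝕜 => rescaledFDeriv T P Q v₀ p.1 p.2) (𝓝 w₀ ×ˢ 𝓝[≠] 0)
      (𝓝 (T ∘L fderiv 𝕜 (fderiv 𝕜 P) v₀ w₀ + T ∘L fderiv 𝕜 (fun u => Q u 0) v₀
        + (fderiv 𝕜 P v₀ - T ∘L fderiv 𝕜 P v₀))) :=
  ⟨fun ε hε _ => hasFDerivAt_rescaledMap T hε (hP _) (hQ ε _),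
    tendsto_rescaledFDeriv hP' hQ' hTP⟩

end Rescaling

/-- second assertion of Lemma 1: for each `ε > 0` the map `w ↦ Ψ(w,ε)` is
differentiable with derivative
`(1/ε)ΠP'(v₀+εw) + ΠQ'_v(v₀+εw,ε) + (I−Π)P'(v₀+εw) + ε(I−Π)Q'_v(v₀+εw,ε)`,
and as `(w,ε) → (w₀,0)` with `ε > 0` this derivative converges in operator norm to
`Ψ'_w(w₀,0) = ΠP''(v₀)w₀ + ΠQ'_v(v₀,0) + (I−Π)P'(v₀)`. -/
theorem stmt_2 {n : ℕ}
    (P : EuclideanSpace ℝ (Fin n) → EuclideanSpace ℝ (Fin n))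
    (Q : EuclideanSpace ℝ (Fin n) → ℝ → EuclideanSpace ℝ (Fin n))
    (hP : ContDiff ℝ 2 P)
    (hQ : ContDiff ℝ 1 fun p : EuclideanSpace ℝ (Fin n) × ℝ => Q p.1 p.2)
    (v₀ : EuclideanSpace ℝ (Fin n)) (hv₀ : P v₀ = 0)
    (Pr : EuclideanSpace ℝ (Fin n) →L[ℝ] EuclideanSpace ℝ (Fin n))
    (hPr : ∀ x, Pr (Pr x) = Pr x)
    (hPrP' : ∀ x, Pr (fderiv ℝ P v₀ x) = 0)
    (hPrQ : Pr (Q v₀ 0) = 0)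
    (Ψ : EuclideanSpace ℝ (Fin n) → ℝ → EuclideanSpace ℝ (Fin n))
    (hΨpos : ∀ w : EuclideanSpace ℝ (Fin n), ∀ ε > (0:ℝ), Ψ w ε =
      ε⁻¹ • ((P (v₀ + ε • w) + ε • Q (v₀ + ε • w) ε)
          - Pr (P (v₀ + ε • w) + ε • Q (v₀ + ε • w) ε)) +
        (ε ^ 2)⁻¹ • Pr (P (v₀ + ε • w) + ε • Q (v₀ + ε • w) ε)) :
    (∀ ε > (0:ℝ), ∀ w : EuclideanSpace ℝ (Fin n),
      HasFDerivAt (fun w' => Ψ w' ε)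
        (ε⁻¹ • (Pr ∘L fderiv ℝ P (v₀ + ε • w))
          + Pr ∘L fderiv ℝ (fun u => Q u ε) (v₀ + ε • w)
          + (fderiv ℝ P (v₀ + ε • w) - Pr ∘L fderiv ℝ P (v₀ + ε • w))
          + ε • (fderiv ℝ (fun u => Q u ε) (v₀ + ε • w)
              - Pr ∘L fderiv ℝ (fun u => Q u ε) (v₀ + ε • w))) w) ∧
    ∀ w₀ : EuclideanSpace ℝ (Fin n),
      Tendsto (fun p : EuclideanSpace ℝ (Fin n) × ℝ =>
          (p.2)⁻¹ • (Pr ∘L fderiv ℝ P (v₀ + p.2 • p.1))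
            + Pr ∘L fderiv ℝ (fun u => Q u p.2) (v₀ + p.2 • p.1)
            + (fderiv ℝ P (v₀ + p.2 • p.1) - Pr ∘L fderiv ℝ P (v₀ + p.2 • p.1))
            + p.2 • (fderiv ℝ (fun u => Q u p.2) (v₀ + p.2 • p.1)
                - Pr ∘L fderiv ℝ (fun u => Q u p.2) (v₀ + p.2 • p.1)))
        ((𝓝 w₀) ×ˢ (𝓝[>] (0:ℝ)))
        (𝓝 (Pr ∘L (fderiv ℝ (fderiv ℝ P) v₀ w₀)
          + Pr ∘L fderiv ℝ (fun u => Q u 0) v₀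
          + (fderiv ℝ P v₀ - Pr ∘L fderiv ℝ P v₀))) := by
  have hP' : Differentiable ℝ (fderiv ℝ P) :=
    (hP.fderiv_right (m := 1) (by norm_num)).differentiable one_ne_zero
  have hQdiff (ε : ℝ) : Differentiable ℝ fun u => Q u ε :=
    (hQ.differentiable one_ne_zero).comp (differentiable_id.prodMk (differentiable_const ε))
  have hQ' := continuous_fderiv_left_of_contDiff hQ
  obtain ⟨hderiv, hlim⟩ := stmt_2_general (hP.differentiable two_ne_zero) (hP' v₀) hQdiff
    hQ'.continuousAt (ContinuousLinearMap.ext hPrP')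
  exact ⟨fun ε hε w => (hderiv ε hε.ne' w).congr_of_eventuallyEq
      (.of_forall fun w' => hΨpos w' ε hε),
    fun w₀ => (hlim w₀).mono_left (prod_mono le_rfl (nhdsGT_le_nhdsNE 0))⟩
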